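/- arXiv:2506.22145 — 2 statements merged into one kernel-verified Lean document; each statement's English description precedes it below -/
import Mathlib

section
/- Let T be a Cayley tree labelled with [n]_0. The second row of blob(T) consists of the numbers 1,…,n−1 each appearing exactly once (so blob(T) is a permutation of {1,…,n−1}) if and only if T is a path graph with endpoints 0 and n. Moreover, if P is such a path with interior word w(P) = w_1 w_2 ⋯ w_{n−1} (the labels along the path from 0 to n, excluding 0 and n), decomposed at its left-to-right maxima as w(P) = r_1 a^1_1 ⋯ a^1_{l_1} r_2 a^2_1 ⋯ a^2_{l_2} ⋯ r_k a^k_1 ⋯ a^k_{l_k} with r_1 < r_2 < ⋯ < r_k, then blob(P), viewed as a permutation of {1,…,n−1}, equals the product of the disjoint cycles (r_i a^i_{l_i} a^i_{l_i −1} ⋯ a^i_2 a^i_1) for i = 1,…,k; equivalently, blob(P) is the inverse of the permutation obtained by applying Foata's fundamental transformation to w(P). -/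
/-!
Let `σ j` be the next record after `j` when `j` is a record, and `σ j = j` otherwise, so that
`blob = f ∘ σ` on `{1,…,n-1}`. Since `n` is always the largest record, `σ` is a bijection from
`{1,…,n-1}` onto `{1,…,n}` minus the smallest record `r₁`, and `f r₁ = 0` (`firstRecord_parent`),
because the child of the root above `r₁` is itself a record. Hence the values of `blob`, together
with one additional `0`, are the values of `f` on `{1,…,n}`. So `blob` is a permutation of
`{1,…,n-1}` exactly when `f` is injective on `{1,…,n}` and omits the value `n`, that is, when the
tree is a path from `0` to `n`.

For a path, the letter at position `p` of the word is `f^[n-p] n`, these letters exhaust `{1,…,n}`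
(`path_main`), and the ancestors of a letter are the letters before it, so tree records are
left-to-right maxima (`isRecord_iff`). If the letter after `w p` is not a record, then `blob` sends
it to its parent `w p`. If it is a record, it is the next record after the head of the block
containing `w p` (`nextRecord_block`), so `blob` sends this head to `w p`.
-/

open scoped Classical

namespace WearyParking

/-- `f` is the parent function of a Cayley tree on `{0,…,n}` rooted at `0`:
`f 0 = 0`, `f` is pinned to `0` outside `{1,…,n}`, `f` maps `{1,…,n}` into `{0,…,n}`,
and every vertex reaches the root under iteration. -/
def IsCayleyTree (n : ℕ) (f : ℕ → ℕ) : Prop :=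
  f 0 = 0 ∧ (∀ i, n < i → f i = 0) ∧
  (∀ i, 1 ≤ i → i ≤ n → f i ≤ n) ∧
  (∀ i, 1 ≤ i → i ≤ n → ∃ k, f^[k] i = 0)

/-- A non-root vertex `i` is a record of the tree if it is greater than
all of its ancestors. -/
def IsRecord (n : ℕ) (f : ℕ → ℕ) (i : ℕ) : Prop :=
  1 ≤ i ∧ i ≤ n ∧ ∀ k, 1 ≤ k → f^[k] i < i

/-- The smallest record larger than `i`. -/
noncomputable def nextRecord (n : ℕ) (f : ℕ → ℕ) (i : ℕ) : ℕ :=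
  sInf {j | IsRecord n f j ∧ i < j}

/-- The record (blob) code of the tree, a function on `{1,…,n-1}`:
at a non-record position it records the parent, and at a record position it
records the parent of the next record. -/
noncomputable def blob (n : ℕ) (f : ℕ → ℕ) (i : ℕ) : ℕ :=
  if IsRecord n f i then f (nextRecord n f i) else f i

/-- Number of children of vertex `v` in the tree. -/
def numChildren (n : ℕ) (f : ℕ → ℕ) (v : ℕ) : ℕ :=
  ((Finset.Icc 1 n).filter fun i => f i = v).card

/-- The list of the first `i+1` vertices visited by the priority-first search:
start at the root `0`; at each step visit the smallest unvisited vertex whose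
parent has been visited. -/
noncomputable def wearyList (n : ℕ) (f : ℕ → ℕ) : ℕ → List ℕ
  | 0 => [0]
  | (i + 1) =>
      wearyList n f i ++
        [sInf {v | 1 ≤ v ∧ v ≤ n ∧ v ∉ wearyList n f i ∧ f v ∈ wearyList n f i}]

/-- The weary permutation of the tree: `weary n f i` is the `i`-th vertex visited
by the priority-first search (with `weary n f 0 = 0`). -/
noncomputable def weary (n : ℕ) (f : ℕ → ℕ) (i : ℕ) : ℕ :=
  (wearyList n f n).getD i 0

/-- The inverse of the weary permutation. -/
noncomputable def wearyInv (n : ℕ) (f : ℕ → ℕ) (v : ℕ) : ℕ :=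
  sInf {i | weary n f i = v}

/-- The preference sequence `π_T` of the tree: `π_T i = ω_T⁻¹ (f_T i) + 1`. -/
noncomputable def pref (n : ℕ) (f : ℕ → ℕ) (i : ℕ) : ℕ :=
  wearyInv n f (f i) + 1

/-- Parent function of the priority tree `pt(T)`: `ω_T⁻¹ ∘ f_T ∘ ω_T`. -/
noncomputable def prioParent (n : ℕ) (f : ℕ → ℕ) (i : ℕ) : ℕ :=
  wearyInv n f (f (weary n f i))

/-- The list of spots occupied by cars `1,…,c` in the classical parking process:
car `c` parks at the first spot `≥ π c` not occupied by an earlier car. -/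
noncomputable def spotList (π : ℕ → ℕ) : ℕ → List ℕ
  | 0 => []
  | (c + 1) => spotList π c ++ [sInf {s | π (c + 1) ≤ s ∧ s ∉ spotList π c}]

/-- The spot where car `c` ends up in the classical parking process. -/
noncomputable def spot (π : ℕ → ℕ) (c : ℕ) : ℕ :=
  (spotList π c).getD (c - 1) 0

/-- `π` is a parking function of length `n`: preferences lie in `{1,…,n}`
(pinned to `1` outside `{1,…,n}`) and every car parks within the `n` spots. -/
def IsParkingFun (n : ℕ) (π : ℕ → ℕ) : Prop :=
  (∀ c, 1 ≤ c → c ≤ n → 1 ≤ π c ∧ π c ≤ n) ∧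
  (∀ c, c = 0 ∨ n < c → π c = 1) ∧
  (∀ c, 1 ≤ c → c ≤ n → spot π c ≤ n)

/-- The bird's-eye permutation `ω_π`: the car parked at spot `i` (and `0` at `0`). -/
noncomputable def birdsEye (n : ℕ) (π : ℕ → ℕ) (i : ℕ) : ℕ :=
  if i = 0 then 0 else sInf {c | 1 ≤ c ∧ c ≤ n ∧ spot π c = i}

/-- The inverse of the bird's-eye permutation. -/
noncomputable def birdsEyeInv (n : ℕ) (π : ℕ → ℕ) (c : ℕ) : ℕ :=
  sInf {i | birdsEye n π i = c}

/-- Parent function of the parking tree `PT(π)`: `f_π i = ω_π (π i - 1)`. -/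
noncomputable def ptParent (n : ℕ) (π : ℕ → ℕ) (i : ℕ) : ℕ :=
  if 1 ≤ i ∧ i ≤ n then birdsEye n π (π i - 1) else 0

/-- `v` is a record of the parking function `π`, i.e. a left-to-right maximum of
the word `ω_π(1) ω_π(2) ⋯ ω_π(n)`. -/
def IsPfRecord (n : ℕ) (π : ℕ → ℕ) (v : ℕ) : Prop :=
  ∃ i, 1 ≤ i ∧ i ≤ n ∧ birdsEye n π i = v ∧ ∀ j, 1 ≤ j → j < i → birdsEye n π j < v

/-- The waiting time of the tree: `wait T = Σ_{i=1}^n (i - f_{pt(T)}(i))`. -/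
noncomputable def wait (n : ℕ) (f : ℕ → ℕ) : ℕ :=
  ∑ i ∈ Finset.Icc 1 n, (i - prioParent n f i)

/-- The number of priority small ascents of the tree. -/
noncomputable def psa (n : ℕ) (f : ℕ → ℕ) : ℕ :=
  ((Finset.Icc 1 n).filter fun i => prioParent n f i = i - 1).card

/-- The number of children of the root. -/
def degRoot (n : ℕ) (f : ℕ → ℕ) : ℕ := numChildren n f 0

/-- The children sequence: `chseq n f j` is the number of vertices with exactly
`j` children. -/
def chseq (n : ℕ) (f : ℕ → ℕ) (j : ℕ) : ℕ :=
  ((Finset.Icc 0 n).filter fun v => numChildren n f v = j).card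

/-- The number of probes of the parking function: `n` plus the total displacement. -/
noncomputable def probes (n : ℕ) (π : ℕ → ℕ) : ℕ :=
  n + ∑ c ∈ Finset.Icc 1 n, (spot π c - π c)

/-- The number of lucky cars of `π`: cars parking at their preferred spot. -/
noncomputable def lucky (n : ℕ) (π : ℕ → ℕ) : ℕ :=
  ((Finset.Icc 1 n).filter fun c => spot π c = π c).card

/-- The number of `1`s in `π`. -/
def ones (n : ℕ) (π : ℕ → ℕ) : ℕ :=
  ((Finset.Icc 1 n).filter fun c => π c = 1).card

/-- The multiplicity of the value `v` in the parking function `π`. -/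
def multIn (n : ℕ) (π : ℕ → ℕ) (v : ℕ) : ℕ :=
  ((Finset.Icc 1 n).filter fun c => π c = v).card

/-- The multiplicity sequence: `multSeq n π j` is the number of values in
`{1,…,n+1}` appearing exactly `j` times in `π`. -/
def multSeq (n : ℕ) (π : ℕ → ℕ) (j : ℕ) : ℕ :=
  ((Finset.Icc 1 (n + 1)).filter fun v => multIn n π v = j).card

/-- The tree is a path graph with endpoints `0` and `n`: every vertex has at most
one child and `n` is the (unique) leaf. -/
def IsPathTree (n : ℕ) (f : ℕ → ℕ) : Prop :=
  (∀ v, v ≤ n → numChildren n f v ≤ 1) ∧ numChildren n f n = 0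

/-- `g` is the parent map of a rooted forest on `{1,…,n}` rooted at `{1,…,k}`:
the vertices `1,…,k` are roots (fixed points), every other vertex of `{1,…,n}` has a
parent in `{1,…,n}`, every vertex reaches one of the roots under iteration, and `g`
is pinned to `0` outside `{1,…,n}`. -/
def IsForestRootedAt (n k : ℕ) (g : ℕ → ℕ) : Prop :=
  (∀ i, 1 ≤ i → i ≤ k → g i = i) ∧
  (∀ i, k < i → i ≤ n → 1 ≤ g i ∧ g i ≤ n) ∧
  (∀ i, 1 ≤ i → i ≤ n → ∃ m, 1 ≤ g^[m] i ∧ g^[m] i ≤ k) ∧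
  (∀ i, i = 0 ∨ n < i → g i = 0)

/-! ### Records of a Cayley tree -/

lemma iter_zero {n : ℕ} {f : ℕ → ℕ} (hf : IsCayleyTree n f) (k : ℕ) : f^[k] 0 = 0 :=
  Function.iterate_fixed hf.1 k

lemma parent_le {n : ℕ} {f : ℕ → ℕ} (hf : IsCayleyTree n f) (i : ℕ) : f i ≤ n := by
  obtain ⟨h0, h1, h2, -⟩ := hf
  rcases Nat.eq_zero_or_pos i with rfl | hi
  · omega
  · rcases Nat.lt_or_ge n i with h | h
    · rw [h1 i h]; omega
    · exact h2 i hi h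

lemma iter_le {n : ℕ} {f : ℕ → ℕ} (hf : IsCayleyTree n f) {i : ℕ} (hi : i ≤ n) (k : ℕ) :
    f^[k] i ≤ n := by
  cases k with
  | zero => exact hi
  | succ k => rw [Function.iterate_succ_apply']; exact parent_le hf _

lemma iter_ne_self {n : ℕ} {f : ℕ → ℕ} (hf : IsCayleyTree n f) {i : ℕ} (hi : 1 ≤ i)
    (hin : i ≤ n) {k : ℕ} (hk : 1 ≤ k) : f^[k] i ≠ i := by
  intro h
  obtain ⟨K, hK⟩ := hf.2.2.2 i hi hin
  have h1 : f^[k * K] i = i := by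
    rw [Function.iterate_mul]; exact Function.iterate_fixed h K
  obtain ⟨c, hc⟩ : ∃ c, k * K = c + K :=
    ⟨k * K - K, (Nat.sub_add_cancel (Nat.le_mul_of_pos_left K hk)).symm⟩
  rw [hc, Function.iterate_add_apply, hK, iter_zero hf] at h1
  omega

lemma isRecord_n {n : ℕ} {f : ℕ → ℕ} (hf : IsCayleyTree n f) (hn : 1 ≤ n) : IsRecord n f n :=
  ⟨hn, le_rfl, fun k hk =>
    lt_of_le_of_ne (iter_le hf le_rfl k) (iter_ne_self hf hn le_rfl hk)⟩

lemma nextRecord_spec {n : ℕ} {f : ℕ → ℕ} (hf : IsCayleyTree n f) (hn : 1 ≤ n) {j : ℕ}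
    (hj : j < n) : IsRecord n f (nextRecord n f j) ∧ j < nextRecord n f j :=
  Nat.sInf_mem (s := {i | IsRecord n f i ∧ j < i}) ⟨n, isRecord_n hf hn, hj⟩

lemma nextRecord_le {n : ℕ} {f : ℕ → ℕ} {i j : ℕ} (h : IsRecord n f i) (hj : j < i) :
    nextRecord n f j ≤ i :=
  Nat.sInf_le (s := {i | IsRecord n f i ∧ j < i}) ⟨h, hj⟩

/-- The vertex whose parent is recorded by the record code at `j`: the next record if `j` is a
record, and `j` itself otherwise. -/
noncomputable def shift (n : ℕ) (f : ℕ → ℕ) (j : ℕ) : ℕ :=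
  if IsRecord n f j then nextRecord n f j else j

lemma blob_eq (n : ℕ) (f : ℕ → ℕ) (j : ℕ) : blob n f j = f (shift n f j) := by
  unfold blob shift; split_ifs <;> rfl

/-- The smallest record of the tree. -/
noncomputable def firstRecord (n : ℕ) (f : ℕ → ℕ) : ℕ := sInf {j | IsRecord n f j}

lemma firstRecord_spec {n : ℕ} {f : ℕ → ℕ} (hf : IsCayleyTree n f) (hn : 1 ≤ n) :
    IsRecord n f (firstRecord n f) :=
  Nat.sInf_mem (s := {j | IsRecord n f j}) ⟨n, isRecord_n hf hn⟩

lemma firstRecord_le {n : ℕ} {f : ℕ → ℕ} {i : ℕ} (h : IsRecord n f i) : firstRecord n f ≤ i :=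
  Nat.sInf_le (s := {j | IsRecord n f j}) h

/-- The ancestor of the smallest record that is a child of the root is a record, hence it is the
smallest record itself. -/
lemma firstRecord_parent {n : ℕ} {f : ℕ → ℕ} (hf : IsCayleyTree n f) (hn : 1 ≤ n) :
    f (firstRecord n f) = 0 := by
  obtain ⟨h1, h2, h3⟩ := firstRecord_spec hf hn
  set r := firstRecord n f with hr
  have hex := hf.2.2.2 r h1 h2
  have hd := Nat.find_spec hex
  have hmin : ∀ m < Nat.find hex, f^[m] r ≠ 0 := fun m hm => Nat.find_min hex hm
  generalize Nat.find hex = d at hd hmin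
  rcases d with _ | d
  · simp only [Function.iterate_zero, id] at hd; omega
  · have hc := hmin d (by omega)
    rw [Function.iterate_succ_apply'] at hd
    have hrec : IsRecord n f (f^[d] r) := by
      refine ⟨by omega, iter_le hf h2 d, fun k hk => ?_⟩
      obtain ⟨k, rfl⟩ : ∃ m, k = m + 1 := ⟨k - 1, by omega⟩
      rw [Function.iterate_succ_apply, hd, iter_zero hf]
      omega
    have hle := firstRecord_le hrec
    rcases d with _ | d
    · simpa using hd
    · have := h3 (d + 1) (by omega)
      omega

lemma shift_mem {n : ℕ} {f : ℕ → ℕ} (hf : IsCayleyTree n f) (hn : 1 ≤ n) {j : ℕ}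
    (h1 : 1 ≤ j) (hj : j ≤ n - 1) :
    1 ≤ shift n f j ∧ shift n f j ≤ n ∧ shift n f j ≠ firstRecord n f := by
  unfold shift
  split_ifs with h
  · obtain ⟨ha, hb⟩ := nextRecord_spec hf hn (j := j) (by omega)
    have := firstRecord_le h
    exact ⟨ha.1, ha.2.1, by omega⟩
  · refine ⟨h1, by omega, ?_⟩
    rintro rfl
    exact h (firstRecord_spec hf hn)

lemma shift_inj {n : ℕ} {f : ℕ → ℕ} (hf : IsCayleyTree n f) (hn : 1 ≤ n) {i j : ℕ}
    (hi : i ≤ n - 1) (hj : j ≤ n - 1) (h : shift n f i = shift n f j) : i = j := by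
  obtain ⟨ha, hb⟩ := nextRecord_spec hf hn (j := i) (by omega)
  obtain ⟨ha', hb'⟩ := nextRecord_spec hf hn (j := j) (by omega)
  unfold shift at h
  split_ifs at h with h1 h2 h2
  · by_contra hne
    rcases Nat.lt_or_gt_of_ne hne with hlt | hlt
    · have := nextRecord_le h2 hlt; omega
    · have := nextRecord_le h1 hlt; omega
  · rw [h] at ha; exact absurd ha h2
  · rw [← h] at ha'; exact absurd ha' h1
  · exact h

lemma shift_surj {n : ℕ} {f : ℕ → ℕ} (hf : IsCayleyTree n f) (hn : 1 ≤ n) {i : ℕ}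
    (h1 : 1 ≤ i) (hi : i ≤ n) (hne : i ≠ firstRecord n f) :
    ∃ j, 1 ≤ j ∧ j ≤ n - 1 ∧ shift n f j = i := by
  by_cases h : IsRecord n f i
  · -- the preimage of a record is the preceding record
    have hlt := firstRecord_le h
    have hbdd : BddAbove {j | IsRecord n f j ∧ j < i} := ⟨i, fun j hj => hj.2.le⟩
    have hmem : sSup {j | IsRecord n f j ∧ j < i} ∈ {j | IsRecord n f j ∧ j < i} :=
      Nat.sSup_mem ⟨firstRecord n f, firstRecord_spec hf hn, by omega⟩ hbdd
    have hmax : ∀ j, IsRecord n f j → j < i → j ≤ sSup {j | IsRecord n f j ∧ j < i} :=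
      fun j h1 h2 => le_csSup hbdd ⟨h1, h2⟩
    generalize sSup {j | IsRecord n f j ∧ j < i} = j at hmem hmax
    obtain ⟨hj, hji⟩ := hmem
    refine ⟨j, hj.1, by omega, ?_⟩
    rw [shift, if_pos hj]
    obtain ⟨ha, hb⟩ := nextRecord_spec hf hn (j := j) (by omega)
    have h3 := nextRecord_le h hji
    by_contra hc
    have := hmax _ ha (by omega)
    omega
  · refine ⟨i, h1, ?_, by rw [shift, if_neg h]⟩
    have : i ≠ n := by
      rintro rfl; exact h (isRecord_n hf hn)
    omega

/-! ### Paths -/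

lemma isPathTree_iff {n : ℕ} {f : ℕ → ℕ} (hf : IsCayleyTree n f) :
    IsPathTree n f ↔
      (∀ i j, 1 ≤ i → i ≤ n → 1 ≤ j → j ≤ n → f i = f j → i = j) ∧
      (∀ i, 1 ≤ i → i ≤ n → f i ≠ n) := by
  unfold IsPathTree numChildren
  constructor
  · rintro ⟨h1, h2⟩
    constructor
    · intro i j hi hin hj hjn hij
      exact Finset.card_le_one.1 (h1 (f i) (parent_le hf i)) i
        (Finset.mem_filter.2 ⟨Finset.mem_Icc.2 ⟨hi, hin⟩, rfl⟩) j
        (Finset.mem_filter.2 ⟨Finset.mem_Icc.2 ⟨hj, hjn⟩, hij.symm⟩)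
    · intro i hi hin he
      rw [Finset.card_eq_zero] at h2
      have : i ∈ (Finset.Icc 1 n).filter fun i => f i = n := by
        simp only [Finset.mem_filter, Finset.mem_Icc]; omega
      rw [h2] at this
      simp at this
  · rintro ⟨h1, h2⟩
    constructor
    · intro v hv
      rw [Finset.card_le_one]
      intro i hi j hj
      simp only [Finset.mem_filter, Finset.mem_Icc] at hi hj
      exact h1 i j hi.1.1 hi.1.2 hj.1.1 hj.1.2 (hi.2.trans hj.2.symm)
    · rw [Finset.card_eq_zero, Finset.filter_eq_empty_iff]
      intro i hi
      rw [Finset.mem_Icc] at hi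
      exact h2 i hi.1 hi.2

lemma bijOn_iff {n : ℕ} {f : ℕ → ℕ} (hf : IsCayleyTree n f) (hn : 1 ≤ n) :
    Set.BijOn (blob n f) (Set.Icc 1 (n - 1)) (Set.Icc 1 (n - 1)) ↔ IsPathTree n f := by
  have hr0 := firstRecord_parent hf hn
  obtain ⟨hr1, hr2, -⟩ := firstRecord_spec hf hn
  rw [isPathTree_iff hf]
  constructor
  · rintro ⟨hm, hinj, -⟩
    have key : ∀ i, 1 ≤ i → i ≤ n → i ≠ firstRecord n f → 1 ≤ f i ∧ f i ≤ n - 1 := by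
      intro i h1 h2 h3
      obtain ⟨j, hj1, hj2, rfl⟩ := shift_surj hf hn h1 h2 h3
      rw [← blob_eq n f]
      exact hm ⟨hj1, hj2⟩
    constructor
    · intro i j hi hin hj hjn hij
      by_cases hie : i = firstRecord n f
      · by_contra hne
        have := key j hj hjn (by rintro rfl; exact hne hie)
        rw [← hij, hie, hr0] at this
        omega
      · by_cases hje : j = firstRecord n f
        · have := key i hi hin hie
          rw [hij, hje, hr0] at this
          omega
        · obtain ⟨a, ha1, ha2, rfl⟩ := shift_surj hf hn hi hin hie
          obtain ⟨b, hb1, hb2, rfl⟩ := shift_surj hf hn hj hjn hje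
          rw [← blob_eq n f, ← blob_eq n f] at hij
          rw [hinj ⟨ha1, ha2⟩ ⟨hb1, hb2⟩ hij]
    · intro i hi hin he
      by_cases hie : i = firstRecord n f
      · rw [hie, hr0] at he; omega
      · have := key i hi hin hie
        omega
  · rintro ⟨h1, h2⟩
    have hm : Set.MapsTo (blob n f) (Set.Icc 1 (n - 1)) (Set.Icc 1 (n - 1)) := by
      intro j hj
      obtain ⟨ha, hb, hc⟩ := shift_mem hf hn hj.1 hj.2
      rw [blob_eq]
      have h3 := h2 _ ha hb
      have h4 := parent_le hf (shift n f j)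
      have h5 : f (shift n f j) ≠ 0 := fun h =>
        hc (h1 _ _ ha hb hr1 hr2 (h.trans hr0.symm))
      exact ⟨by omega, by omega⟩
    have hi : Set.InjOn (blob n f) (Set.Icc 1 (n - 1)) := by
      intro i hi j hj hij
      rw [blob_eq, blob_eq] at hij
      obtain ⟨ha, hb, -⟩ := shift_mem hf hn hi.1 hi.2
      obtain ⟨ha', hb', -⟩ := shift_mem hf hn hj.1 hj.2
      exact shift_inj hf hn hi.2 hj.2 (h1 _ _ ha hb ha' hb' hij)
    refine ⟨hm, hi, ?_⟩
    rw [← Finset.coe_Icc] at hm hi ⊢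
    exact Finset.surjOn_of_injOn_of_card_le _ hm hi le_rfl

/-- In a path the ancestors of `n` exhaust the tree, so the root is reached from `n` after exactly
`n` steps. The set of ancestors of `n` contains the root and is closed under taking children. -/
lemma path_main {n : ℕ} {f : ℕ → ℕ} (hf : IsCayleyTree n f) (hn : 1 ≤ n)
    (hp : IsPathTree n f) :
    f^[n] n = 0 ∧ (∀ k < n, f^[k] n ≠ 0) ∧ (∀ v ≤ n, ∃ k ≤ n, f^[k] n = v) := by
  rw [isPathTree_iff hf] at hp
  obtain ⟨hinj, hne⟩ := hp
  have hex := hf.2.2.2 n hn le_rfl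
  have hd := Nat.find_spec hex
  have hmin : ∀ m < Nat.find hex, f^[m] n ≠ 0 := fun m hm => Nat.find_min hex hm
  generalize Nat.find hex = d at hd hmin
  have hall : ∀ k v, v ≤ n → f^[k] v = 0 → ∃ j ≤ d, f^[j] n = v := by
    intro k
    induction k with
    | zero =>
      intro v hv h
      exact ⟨d, le_rfl, hd.trans h.symm⟩
    | succ k ih =>
      intro v hv h
      rcases Nat.eq_zero_or_pos v with rfl | hv0
      · exact ⟨d, le_rfl, hd⟩
      rw [Function.iterate_succ_apply] at h
      obtain ⟨j, hj, hjv⟩ := ih (f v) (parent_le hf v) h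
      rcases j with _ | j
      · exact absurd hjv.symm (hne v hv0 hv)
      · rw [Function.iterate_succ_apply'] at hjv
        have := hmin j (by omega)
        exact ⟨j, by omega, hinj _ _ (by omega) (iter_le hf le_rfl j) hv0 hv hjv⟩
  have hall' : ∀ v ≤ n, ∃ j ≤ d, f^[j] n = v := by
    intro v hv
    rcases Nat.eq_zero_or_pos v with rfl | hv0
    · exact ⟨d, le_rfl, hd⟩
    · obtain ⟨k, hk⟩ := hf.2.2.2 v hv0 hv
      exact hall k v hv hk
  have hge : n ≤ d := by
    have hsub : Finset.range (n + 1) ⊆ (Finset.range (d + 1)).image fun j => f^[j] n := by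
      intro v hv
      obtain ⟨j, hj, h⟩ := hall' v (by simpa [Nat.lt_succ_iff] using hv)
      exact Finset.mem_image.2 ⟨j, by simp; omega, h⟩
    have := (Finset.card_le_card hsub).trans Finset.card_image_le
    simpa using this
  have hle : d ≤ n := by
    have hmaps : Set.MapsTo (fun j => f^[j] n) (Finset.range d : Set ℕ)
        (Finset.Icc 1 n : Set ℕ) := by
      intro j hj
      have h1 := hmin j (by simpa using hj)
      have h2 := iter_le hf le_rfl j
      simp only [Finset.coe_Icc, Set.mem_Icc]
      omega
    have key : ∀ i j, i < j → j < d → f^[i] n ≠ f^[j] n := by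
      intro i j hij hj h
      apply hmin ((d - j) + i) (by omega)
      rw [Function.iterate_add_apply, h, ← Function.iterate_add_apply,
        Nat.sub_add_cancel hj.le, hd]
    have hi : Set.InjOn (fun j => f^[j] n) (Finset.range d : Set ℕ) := by
      intro i hi j hj hij
      simp only [Finset.coe_range, Set.mem_Iio] at hi hj
      by_contra hne
      rcases Nat.lt_or_gt_of_ne hne with h | h
      · exact key i j h hj hij
      · exact key j i h hi hij.symm
    have := Finset.card_le_card_of_injOn _ hmaps hi
    simpa using this
  obtain rfl : d = n := le_antisymm hle hge
  exact ⟨hd, hmin, hall'⟩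

/-! ### The word of a path -/

/-- The word of a path from `0` to `n`, including both endpoints: `letter n f p` is the vertex at
distance `p` from the root, for `p ≤ n`. -/
def letter (n : ℕ) (f : ℕ → ℕ) (p : ℕ) : ℕ := f^[n - p] n

lemma parent_letter (n : ℕ) (f : ℕ → ℕ) {p : ℕ} (hp : p + 1 ≤ n) :
    f (letter n f (p + 1)) = letter n f p := by
  unfold letter
  rw [← Function.iterate_succ_apply' f]
  congr 1
  omega

lemma iter_letter (n : ℕ) (f : ℕ → ℕ) {p k : ℕ} (hp : p ≤ n) (hk : k ≤ p) :
    f^[k] (letter n f p) = letter n f (p - k) := by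
  unfold letter
  rw [← Function.iterate_add_apply]
  congr 2
  omega

/-- In a path, the records of the tree are the left-to-right maxima of its word. -/
lemma isRecord_iff {n : ℕ} {f : ℕ → ℕ} (hf : IsCayleyTree n f) (hn : 1 ≤ n)
    (hp : IsPathTree n f) {q : ℕ} (h1 : 1 ≤ q) (hq : q ≤ n) :
    IsRecord n f (letter n f q) ↔ ∀ r, 1 ≤ r → r < q → letter n f r < letter n f q := by
  obtain ⟨h0, hpos, -⟩ := path_main hf hn hp
  have hz : letter n f 0 = 0 := h0
  have hq0 : letter n f q ≠ 0 := hpos _ (by omega)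
  constructor
  · intro h r hr hrq
    have := h.2.2 (q - r) (by omega)
    rwa [iter_letter n f hq (by omega), Nat.sub_sub_self hrq.le] at this
  · intro h
    refine ⟨by omega, iter_le hf le_rfl _, fun k hk => ?_⟩
    rcases Nat.lt_or_ge k q with hkq | hkq
    · rw [iter_letter n f hq hkq.le]
      exact h _ (by omega) (by omega)
    · obtain ⟨c, rfl⟩ : ∃ c, k = c + q := ⟨k - q, by omega⟩
      rw [Function.iterate_add_apply, iter_letter n f hq le_rfl, Nat.sub_self, hz, iter_zero hf]
      omega

/-- If a block of the word has its head at position `q` and its last letter at position `p`, then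
the letter at position `p + 1` is the next record after the head. -/
lemma nextRecord_block {n : ℕ} {f : ℕ → ℕ} (hf : IsCayleyTree n f) (hn : 1 ≤ n)
    (hp : IsPathTree n f) {p q : ℕ} (hq : 1 ≤ q) (hqp : q ≤ p) (hpn : p + 1 ≤ n)
    (hrq : IsRecord n f (letter n f q)) (hrp : IsRecord n f (letter n f (p + 1)))
    (hmax : ∀ m, 1 ≤ m → m ≤ p → IsRecord n f (letter n f m) → m ≤ q) :
    nextRecord n f (letter n f q) = letter n f (p + 1) := by
  have hlt : letter n f q < letter n f (p + 1) :=
    (isRecord_iff hf hn hp (by omega) hpn).1 hrp q hq (by omega)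
  refine le_antisymm (nextRecord_le hrp hlt) ?_
  obtain ⟨ha, hb⟩ := nextRecord_spec hf hn (lt_of_lt_of_le hlt (iter_le hf le_rfl _))
  obtain ⟨k, hk, hke⟩ := (path_main hf hn hp).2.2 _ ha.2.1
  have h0 := (path_main hf hn hp).1
  have hkn : k ≠ n := by
    rintro rfl
    have := ha.1
    omega
  obtain ⟨m, hm1, hmn, hm⟩ : ∃ m, 1 ≤ m ∧ m ≤ n ∧ letter n f m = nextRecord n f (letter n f q) :=
    ⟨n - k, by omega, by omega, by rw [letter, Nat.sub_sub_self hk, hke]⟩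
  rw [← hm] at ha hb ⊢
  have hqm : q < m := by
    by_contra hc
    rcases Nat.lt_or_ge m q with h | h
    · have := (isRecord_iff hf hn hp hq (by omega)).1 hrq m hm1 h
      omega
    · obtain rfl : m = q := by omega
      omega
  have hpm : p < m := by
    by_contra hc
    have := hmax m hm1 (by omega) ha
    omega
  rcases Nat.lt_or_ge (p + 1) m with h | h
  · exact ((isRecord_iff hf hn hp hm1 hmn).1 ha (p + 1) (by omega) h).le
  · obtain rfl : m = p + 1 := by omega
    exact le_rfl

/-- The interior word of a path is determined by the parent relations along it. -/
lemma word_eq_letter {n : ℕ} {f w : ℕ → ℕ} (hn : 2 ≤ n)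
    (hw : ∀ p, 1 ≤ p → p + 1 ≤ n - 1 → f (w (p + 1)) = w p) (hl : f n = w (n - 1)) :
    ∀ p, 1 ≤ p → p ≤ n - 1 → w p = letter n f p := by
  have h : ∀ k, k + 2 ≤ n → w (n - 1 - k) = letter n f (n - 1 - k) := by
    intro k
    induction k with
    | zero =>
      intro _
      rw [letter, Nat.sub_zero, Nat.sub_sub_self (by omega), ← hl]
      rfl
    | succ k ih =>
      intro hk
      have e : n - 1 - k = n - 1 - (k + 1) + 1 := by omega
      rw [← hw (n - 1 - (k + 1)) (by omega) (by omega), ← parent_letter n f (by omega), ← e,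
        ih (by omega)]
  intro p h1 hp
  have := h (n - 1 - p) (by omega)
  rwa [Nat.sub_sub_self hp] at this

/-- The record code of a Cayley tree is a permutation of `{1,…,n-1}`
iff the tree is a path with endpoints `0` and `n`.  Moreover, if `w` is the interior
word of such a path (so `f (w 1) = 0`, `f (w (p+1)) = w p`, `f n = w (n-1)`), then
the record code is the inverse of the Foata fundamental transform of `w`: composing
the record code with the map sending each letter to the next letter of its
left-to-right-maximum block (the last letter of a block going to the block's head)
gives the identity on the letters of `w`. -/
theorem stmt3 (n : ℕ) (hn : 1 ≤ n) (f : ℕ → ℕ) (hf : IsCayleyTree n f) :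
    (Set.BijOn (blob n f) (Set.Icc 1 (n - 1)) (Set.Icc 1 (n - 1)) ↔ IsPathTree n f) ∧
    (∀ w : ℕ → ℕ, IsPathTree n f →
      (2 ≤ n → f (w 1) = 0) →
      (∀ p, 1 ≤ p → p + 1 ≤ n - 1 → f (w (p + 1)) = w p) →
      (2 ≤ n → f n = w (n - 1)) →
      ∀ p, 1 ≤ p → p ≤ n - 1 →
        blob n f
          (if p = n - 1 ∨ (∀ q, 1 ≤ q → q < p + 1 → w q < w (p + 1)) then
            w (sSup {q | 1 ≤ q ∧ q ≤ p ∧ ∀ r, 1 ≤ r → r < q → w r < w q})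
          else w (p + 1)) = w p) := by
  refine ⟨bijOn_iff hf hn, ?_⟩
  intro w hp _ hw hl p hp1 hpn
  have hwl := word_eq_letter (by omega) hw (hl (by omega))
  have hrec : ∀ q, 1 ≤ q → q ≤ n - 1 →
      ((∀ r, 1 ≤ r → r < q → w r < w q) ↔ IsRecord n f (letter n f q)) := by
    intro q h1 hq
    rw [isRecord_iff hf hn hp h1 (by omega)]
    refine forall_congr' fun r => forall_congr' fun hr1 => forall_congr' fun hr => ?_
    rw [hwl r hr1 (by omega), hwl q h1 hq]
  have hcond : (p = n - 1 ∨ ∀ q, 1 ≤ q → q < p + 1 → w q < w (p + 1)) ↔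
      IsRecord n f (letter n f (p + 1)) := by
    by_cases h : p = n - 1
    · -- the letter after the interior word is `n`, which is always a record
      have hlast : letter n f (p + 1) = n := by
        rw [letter, h, Nat.sub_add_cancel hn, Nat.sub_self]; rfl
      rw [hlast]
      exact iff_of_true (Or.inl h) (isRecord_n hf hn)
    · rw [or_iff_right h]
      exact hrec (p + 1) (by omega) (by omega)
  rw [hwl p hp1 hpn, ← parent_letter n f (show p + 1 ≤ n by omega)]
  split_ifs with hc
  · rw [hcond] at hc
    have hbdd : BddAbove {q | 1 ≤ q ∧ q ≤ p ∧ ∀ r, 1 ≤ r → r < q → w r < w q} :=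
      ⟨p, fun q hq => hq.2.1⟩
    have hmem : sSup {q | 1 ≤ q ∧ q ≤ p ∧ ∀ r, 1 ≤ r → r < q → w r < w q} ∈
        {q | 1 ≤ q ∧ q ≤ p ∧ ∀ r, 1 ≤ r → r < q → w r < w q} :=
      Nat.sSup_mem ⟨1, le_rfl, hp1, fun r h1 h2 => by omega⟩ hbdd
    have hmax : ∀ m, 1 ≤ m → m ≤ p → IsRecord n f (letter n f m) →
        m ≤ sSup {q | 1 ≤ q ∧ q ≤ p ∧ ∀ r, 1 ≤ r → r < q → w r < w q} :=
      fun m h1 h2 h3 => le_csSup hbdd ⟨h1, h2, (hrec m h1 (by omega)).2 h3⟩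
    generalize sSup {q | 1 ≤ q ∧ q ≤ p ∧ ∀ r, 1 ≤ r → r < q → w r < w q} = q at hmem hmax
    obtain ⟨hq1, hqp, hq⟩ := hmem
    rw [hrec q hq1 (by omega)] at hq
    rw [hwl q hq1 (by omega), blob, if_pos hq,
      nextRecord_block hf hn hp hq1 hqp (by omega) hq hc hmax]
  · have hpne : p ≠ n - 1 := fun h => hc (Or.inl h)
    rw [hcond] at hc
    rw [hwl (p + 1) (by omega) (by omega), blob, if_neg hc]

end WearyParking
end

section
/- Let T and T' be Cayley trees labelled with [n]_0 having the same set of records R and satisfying f_T(i) = f_{T'}(i) for every non-record vertex i ∈ {1,…,n} \ R (i.e., T and T' have the same bonsai sequence and differ only in their attachment sequences). Then the weary permutations of T and T' coincide: ω_T = ω_{T'}. In particular, the weary permutation of a Cayley tree depends only on its bonsai sequence and not on its attachment sequence. -/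
/-!
The search order depends only on the records and on the parents of the non-records because each step
of the search can be described by these data alone. Let `S` be the set of visited vertices. The claim
is that the next visited vertex is the smallest non-record outside `S` with parent in `S`, if there is
one, and otherwise the smallest unvisited record (`sInf_available`).

This rests on the invariant `Good`: `S` contains the root, is closed under taking parents, and its
records form an initial segment of all records. An available non-record `v` has a record `r > v` among
its ancestors (`exists_record_ancestor`). Since `r` is visited, so are all records below `r`, so no
available record is smaller than `v`. If no non-record is available, let `m` be the smallest unvisited
record. The topmost unvisited vertex on the path from `m` to the root is available, hence a record,
hence at least `m`; as proper ancestors of `m` are smaller than `m`, it is `m` itself. In either case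
the invariant persists (`good_wearyList`).
-/

open scoped Classical

namespace WearyParking

/-- The vertices that the search may visit next when the visited vertices are those of `S`. -/
def available (n : ℕ) (f : ℕ → ℕ) (S : List ℕ) : Set ℕ :=
  {v | 1 ≤ v ∧ v ≤ n ∧ v ∉ S ∧ f v ∈ S}

/-- The non-records that the search may visit next. -/
def availableNonrecords (n : ℕ) (f : ℕ → ℕ) (S : List ℕ) : Set ℕ :=
  {v | v ∈ available n f S ∧ ¬ IsRecord n f v}

/-- The records not yet visited, whether or not their parent has been visited. -/
def unvisitedRecords (n : ℕ) (f : ℕ → ℕ) (S : List ℕ) : Set ℕ :=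
  {v | IsRecord n f v ∧ v ∉ S}

/-- The invariant of the search: the visited vertices contain the root, are closed under taking
parents, and contain every record smaller than a visited record. -/
def Good (n : ℕ) (f : ℕ → ℕ) (S : List ℕ) : Prop :=
  0 ∈ S ∧ (∀ x ∈ S, f x ∈ S) ∧
  (∀ r s, IsRecord n f r → IsRecord n f s → r ∈ S → s < r → s ∈ S)

theorem iterate_le {n : ℕ} {f : ℕ → ℕ} (hf : IsCayleyTree n f) {v : ℕ} (hv : v ≤ n) (k : ℕ) :
    f^[k] v ≤ n := by
  induction k with
  | zero => simpa using hv
  | succ k ih =>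
    rw [Function.iterate_succ_apply']
    rcases Nat.eq_zero_or_pos (f^[k] v) with h | h
    · rw [h, hf.1]; exact Nat.zero_le n
    · exact hf.2.2.1 _ h ih

/-- A non-root vertex is not its own proper ancestor. -/
theorem iterate_ne_self {n : ℕ} {f : ℕ → ℕ} (hf : IsCayleyTree n f) {v : ℕ} (hv : 1 ≤ v)
    (hvn : v ≤ n) {k : ℕ} (hk : 1 ≤ k) : f^[k] v ≠ v := by
  intro h
  obtain ⟨j, hj⟩ := hf.2.2.2 v hv hvn
  have h1 : f^[k * j] v = v := by
    rw [Function.iterate_mul]; exact Function.iterate_fixed h j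
  have h2 : f^[k * j] v = 0 := by
    have hle : j ≤ k * j := Nat.le_mul_of_pos_left j hk
    rw [← Nat.sub_add_cancel hle, Function.iterate_add_apply, hj]
    exact Function.iterate_fixed hf.1 _
  omega

theorem exists_record_ancestor {n : ℕ} {f : ℕ → ℕ} (hf : IsCayleyTree n f) (v : ℕ) (hv : 1 ≤ v)
    (hvn : v ≤ n) (hr : ¬ IsRecord n f v) : ∃ k, 1 ≤ k ∧ IsRecord n f (f^[k] v) ∧ v < f^[k] v := by
  have hex : ∃ k, 1 ≤ k ∧ v ≤ f^[k] v := by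
    by_contra! h
    exact hr ⟨hv, hvn, h⟩
  obtain ⟨k, hk, hle⟩ := hex
  have hlt : v < f^[k] v := lt_of_le_of_ne hle (iterate_ne_self hf hv hvn hk).symm
  have hwn := iterate_le hf hvn k
  by_cases hw : IsRecord n f (f^[k] v)
  · exact ⟨k, hk, hw, hlt⟩
  · obtain ⟨l, hl, hrec, hlt'⟩ := exists_record_ancestor hf (f^[k] v) (by omega) hwn hw
    rw [← Function.iterate_add_apply] at hrec hlt'
    exact ⟨l + k, by omega, hrec, by omega⟩
termination_by n - v

theorem iterate_mem {n : ℕ} {f : ℕ → ℕ} {S : List ℕ} (hS : Good n f S) {x : ℕ} (hx : x ∈ S)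
    (k : ℕ) : f^[k] x ∈ S := by
  induction k with
  | zero => exact hx
  | succ k ih => rw [Function.iterate_succ_apply']; exact hS.2.1 _ ih

/-- The next visited vertex in terms of the records and the parents of non-records only. When all
vertices are visited, both sides are infima of the empty set. -/
theorem sInf_available {n : ℕ} {f : ℕ → ℕ} (hf : IsCayleyTree n f) {S : List ℕ}
    (hS : Good n f S) :
    sInf (available n f S) = if (availableNonrecords n f S).Nonempty
      then sInf (availableNonrecords n f S) else sInf (unvisitedRecords n f S) := by
  split_ifs with hB
  · have hmem := Nat.sInf_mem hB
    have hA : (available n f S).Nonempty := ⟨_, hmem.1⟩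
    refine le_antisymm (Nat.sInf_le hmem.1) ?_
    have hb := Nat.sInf_mem hA
    by_cases hrec : IsRecord n f (sInf (available n f S))
    · obtain ⟨k, hk, hr, hlt⟩ := exists_record_ancestor hf _ hmem.1.1 hmem.1.2.1 hmem.2
      obtain ⟨l, rfl⟩ : ∃ l, k = l + 1 := ⟨k - 1, by omega⟩
      have hrS := iterate_mem hS hmem.1.2.2.2 l
      rw [← Function.iterate_succ_apply] at hrS
      by_contra hcon
      exact hb.2.2.1 (hS.2.2 _ _ hr hrec hrS (by omega))
    · exact Nat.sInf_le ⟨hb, hrec⟩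
  · have hrec : ∀ a ∈ available n f S, IsRecord n f a := fun a ha => by
      by_contra h
      exact hB ⟨a, ha, h⟩
    have hsub : ∀ a ∈ available n f S, a ∈ unvisitedRecords n f S :=
      fun a ha => ⟨hrec a ha, ha.2.2.1⟩
    rcases (unvisitedRecords n f S).eq_empty_or_nonempty with hC | hC
    · rw [Set.subset_eq_empty (fun a ha => hsub a ha) hC, hC]
    · have hm := Nat.sInf_mem hC
      suffices hmA : sInf (unvisitedRecords n f S) ∈ available n f S from
        le_antisymm (Nat.sInf_le hmA) (Nat.sInf_le (hsub _ (Nat.sInf_mem ⟨_, hmA⟩)))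
      generalize hmdef : sInf (unvisitedRecords n f S) = m at hm ⊢
      obtain ⟨j, hj⟩ := hf.2.2.2 m hm.1.1 hm.1.2.1
      have hex : ∃ k, f^[k] m ∈ S := ⟨j, by rw [hj]; exact hS.1⟩
      -- The first visited vertex on the path from `m` to the root is `f^[l + 1] m`.
      obtain ⟨l, hl⟩ : ∃ l, Nat.find hex = l + 1 := by
        refine ⟨Nat.find hex - 1, ?_⟩
        have h0 : Nat.find hex ≠ 0 := fun h => hm.2 (by simpa [h] using Nat.find_spec hex)
        omega
      have hfl : f (f^[l] m) ∈ S := by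
        have h := Nat.find_spec hex
        rwa [hl, Function.iterate_succ_apply'] at h
      have hnl : f^[l] m ∉ S := Nat.find_min hex (by omega)
      have hpos : 1 ≤ f^[l] m := by
        rcases Nat.eq_zero_or_pos (f^[l] m) with h | h
        · exact absurd (h ▸ hS.1) hnl
        · exact h
      have ha : f^[l] m ∈ available n f S := ⟨hpos, iterate_le hf hm.1.2.1 l, hnl, hfl⟩
      have hge : m ≤ f^[l] m := hmdef.symm.trans_le (Nat.sInf_le (hsub _ ha))
      rcases Nat.eq_zero_or_pos l with rfl | hlpos
      · exact ha
      · exact absurd (hm.1.2.2 l hlpos) (by omega)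

theorem good_wearyList {n : ℕ} {f : ℕ → ℕ} (hf : IsCayleyTree n f) (i : ℕ) :
    Good n f (wearyList n f i) := by
  induction i with
  | zero =>
    refine ⟨by simp [wearyList], by simp [wearyList, hf.1], ?_⟩
    intro r s hr _ hmem _
    have h1 := hr.1
    simp [wearyList] at hmem
    omega
  | succ i ih =>
    have hstep : wearyList n f (i + 1) =
        wearyList n f i ++ [sInf (available n f (wearyList n f i))] := rfl
    rw [hstep]
    have hnext := sInf_available hf ih
    generalize wearyList n f i = S at ih hnext ⊢
    refine ⟨by simp [ih.1], ?_, ?_⟩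
    · intro x hx
      rcases List.mem_append.1 hx with hx | hx
      · exact List.mem_append_left _ (ih.2.1 x hx)
      · rw [List.mem_singleton] at hx
        subst hx
        apply List.mem_append_left
        rcases (available n f S).eq_empty_or_nonempty with hA | hA
        · simpa [hA, hf.1] using ih.1
        · exact (Nat.sInf_mem hA).2.2.2
    · intro r s hr hs hmem hlt
      apply List.mem_append_left
      rcases List.mem_append.1 hmem with hx | hx
      · exact ih.2.2 r s hr hs hx hlt
      · rw [List.mem_singleton] at hx
        rw [← hx] at hnext
        split_ifs at hnext with hB
        · exact absurd hr (hnext ▸ (Nat.sInf_mem hB).2)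
        · by_contra hsS
          have h : sInf (unvisitedRecords n f S) ≤ s := Nat.sInf_le ⟨hs, hsS⟩
          omega

/-- Both searches visit the same vertices in the same order. -/
theorem wearyList_eq {n : ℕ} {f g : ℕ → ℕ} (hf : IsCayleyTree n f) (hg : IsCayleyTree n g)
    (hrec : ∀ i, IsRecord n f i ↔ IsRecord n g i)
    (hpar : ∀ i, 1 ≤ i → i ≤ n → ¬ IsRecord n f i → f i = g i) (i : ℕ) :
    wearyList n f i = wearyList n g i := by
  induction i with
  | zero => rfl
  | succ i ih =>
    change wearyList n f i ++ [sInf (available n f (wearyList n f i))] =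
      wearyList n g i ++ [sInf (available n g (wearyList n g i))]
    rw [sInf_available hf (good_wearyList hf i), sInf_available hg (good_wearyList hg i), ih]
    have hB : availableNonrecords n f (wearyList n g i) =
        availableNonrecords n g (wearyList n g i) := by
      ext v
      constructor
      · rintro ⟨⟨h1, h2, h3, h4⟩, h5⟩
        exact ⟨⟨h1, h2, h3, hpar v h1 h2 h5 ▸ h4⟩, fun h => h5 ((hrec v).2 h)⟩
      · rintro ⟨⟨h1, h2, h3, h4⟩, h5⟩
        have h5' : ¬ IsRecord n f v := fun h => h5 ((hrec v).1 h)
        exact ⟨⟨h1, h2, h3, (hpar v h1 h2 h5').symm ▸ h4⟩, h5'⟩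
    have hC : unvisitedRecords n f (wearyList n g i) =
        unvisitedRecords n g (wearyList n g i) := by
      ext v
      exact and_congr_left' (hrec v)
    rw [hB, hC]

/-- Two Cayley trees with the same set of records and the same
parent function on non-record vertices (i.e. with the same bonsai sequence) have
the same weary permutation. -/
theorem stmt8 (n : ℕ) (f g : ℕ → ℕ) (hf : IsCayleyTree n f) (hg : IsCayleyTree n g)
    (hrec : ∀ i, IsRecord n f i ↔ IsRecord n g i)
    (hpar : ∀ i, 1 ≤ i → i ≤ n → ¬ IsRecord n f i → f i = g i) :
    ∀ i, i ≤ n → weary n f i = weary n g i := by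
  intro i _
  rw [weary, weary, wearyList_eq hf hg hrec hpar]

end WearyParking
end
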